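/- arXiv:0805.1273 — 3 statements merged into one kernel-verified Lean document; each statement's English description precedes it below -/
import Mathlib

section
/- For every integer n >= 0: \sum_{p=0}^{\lfloor n/2 \rfloor} (1/(2p+1)) * C(3p, p) * C(n+p, 3p) = (1/(n+1)) * C(2n, n). For every integer n >= 1: \sum_{p=0}^{\lfloor (n-1)/2 \rfloor} (1/(2p+1)) * C(3p+1, p+1) * C(n+p, 3p+1) = (1/(n+1)) * C(2n, n). -/
open Finset

lemma key_series (d : ℕ) :
    ((1 + PowerSeries.X : PowerSeries ℚ)) ^ (d + 1) *
      PowerSeries.expand 2 two_ne_zero (PowerSeries.mk fun n => (Nat.choose (d + n) d : ℚ)) =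
    PowerSeries.mk fun n => (Nat.choose (d + n) d : ℚ) := by
  have h1 := PowerSeries.mk_add_choose_mul_one_sub_pow_eq_one ℚ d
  have h2 := congrArg (PowerSeries.expand 2 two_ne_zero) h1
  simp only [map_mul, map_pow, map_sub, map_one, PowerSeries.expand_X] at h2
  set A : PowerSeries ℚ := PowerSeries.mk fun n => (Nat.choose (d + n) d : ℚ) with hA
  set B := PowerSeries.expand 2 two_ne_zero A with hB
  have h3 : (1 - PowerSeries.X ^ 2 : PowerSeries ℚ) = (1 - PowerSeries.X) * (1 + PowerSeries.X) := by
    ring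
  rw [h3, mul_pow] at h2
  calc (1 + PowerSeries.X : PowerSeries ℚ) ^ (d + 1) * B
      = (A * (1 - PowerSeries.X) ^ (d + 1)) * ((1 + PowerSeries.X : PowerSeries ℚ) ^ (d + 1) * B) := by
        rw [h1, one_mul]
    _ = A * (B * ((1 - PowerSeries.X) ^ (d + 1) * (1 + PowerSeries.X) ^ (d + 1))) := by ring
    _ = A := by rw [h2, mul_one]

lemma coeff_pow_aux (m k : ℕ) :
    PowerSeries.coeff k ((1 + PowerSeries.X : PowerSeries ℚ) ^ m) = (m.choose k : ℚ) := by
  have : ((1 + PowerSeries.X : PowerSeries ℚ) ^ m) =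
      (((1 + Polynomial.X) ^ m : Polynomial ℚ) : PowerSeries ℚ) := by
    simp
  rw [this, Polynomial.coeff_coe, Polynomial.coeff_one_add_X_pow]

lemma key_sum (d N : ℕ) :
    ∑ q ∈ range (N / 2 + 1), (Nat.choose (d + q) d : ℚ) * Nat.choose (d + 1) (N - 2 * q) =
      Nat.choose (d + N) d := by
  have h := congrArg (PowerSeries.coeff N) (key_series d)
  rw [mul_comm, PowerSeries.coeff_mul, PowerSeries.coeff_mk,
    Finset.Nat.sum_antidiagonal_eq_sum_range_succ_mk] at h
  rw [← h]
  simp only [coeff_pow_aux]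
  apply Finset.sum_of_injOn (fun q => 2 * q)
  · intro a _ b _ hab
    simpa using hab
  · intro a ha
    simp only [coe_range, Set.mem_Iio] at ha ⊢
    omega
  · intro k hk hk'
    rw [PowerSeries.coeff_expand, if_neg, zero_mul]
    rintro ⟨c, rfl⟩
    apply hk'
    simp only [Finset.mem_range] at hk
    refine ⟨c, ?_, rfl⟩
    simp only [coe_range, Set.mem_Iio]
    omega
  · intro q _
    rw [PowerSeries.coeff_expand]
    simp

theorem stmt17 :
    (∀ n : ℕ,
      (∑ p ∈ Finset.range (n / 2 + 1),
          (1 : ℚ) / (2 * p + 1) * Nat.choose (3 * p) p * Nat.choose (n + p) (3 * p)) =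
        (1 : ℚ) / (n + 1) * Nat.choose (2 * n) n) ∧
    ∀ n : ℕ, 1 ≤ n →
      (∑ p ∈ Finset.range ((n - 1) / 2 + 1),
          (1 : ℚ) / (2 * p + 1) * Nat.choose (3 * p + 1) (p + 1) *
            Nat.choose (n + p) (3 * p + 1)) =
        (1 : ℚ) / (n + 1) * Nat.choose (2 * n) n := by
  constructor
  · intro n
    rw [two_mul n, ← key_sum n n, Finset.mul_sum]
    apply Finset.sum_congr rfl
    intro p hp
    simp only [Finset.mem_range] at hp
    obtain ⟨r, rfl⟩ : ∃ r, n = 2 * p + r := ⟨n - 2 * p, by omega⟩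
    rw [show 2 * p + r - 2 * p = r by omega,
      Nat.cast_choose ℚ (show p ≤ 3 * p by omega),
      Nat.cast_choose ℚ (show 3 * p ≤ 2 * p + r + p by omega),
      Nat.cast_choose ℚ (show 2 * p + r ≤ 2 * p + r + p by omega),
      Nat.cast_choose ℚ (show r ≤ 2 * p + r + 1 by omega),
      show 3 * p - p = 2 * p by omega, show 2 * p + r + p - 3 * p = r by omega,
      show 2 * p + r + p - (2 * p + r) = p by omega,
      show 2 * p + r + 1 - r = 2 * p + 1 by omega,
      Nat.factorial_succ (2 * p + r), Nat.factorial_succ (2 * p)]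
    have := Nat.factorial_ne_zero
    have h1 : ((2 * p + r : ℕ) : ℚ) + 1 ≠ 0 := by positivity
    push_cast at h1 ⊢
    field_simp
  · intro n hn
    obtain ⟨m, rfl⟩ : ∃ m, n = m + 1 := ⟨n - 1, by omega⟩
    have hk := key_sum m (m + 2)
    rw [show (m + 2) / 2 = m / 2 + 1 by omega, Finset.sum_range_succ'] at hk
    have hz : Nat.choose (m + 1) (m + 2 - 2 * 0) = 0 := Nat.choose_eq_zero_of_lt (by omega)
    rw [hz, Nat.cast_zero, mul_zero, add_zero] at hk
    have hR : (1 : ℚ) / ((m + 1 : ℕ) + 1) * Nat.choose (2 * (m + 1)) (m + 1) =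
        1 / (m + 1) * Nat.choose (m + (m + 2)) m := by
      rw [Nat.cast_choose ℚ (show m + 1 ≤ 2 * (m + 1) by omega),
        Nat.cast_choose ℚ (show m ≤ m + (m + 2) by omega),
        show 2 * (m + 1) - (m + 1) = m + 1 by omega,
        show m + (m + 2) - m = m + 1 + 1 by omega,
        show 2 * (m + 1) = m + (m + 2) by omega,
        Nat.factorial_succ (m + 1), Nat.factorial_succ m]
      have h1 : ((m : ℚ) + 1 + 1) ≠ 0 := by positivity
      push_cast
      field_simp
    rw [hR, ← hk, Finset.mul_sum, show m + 1 - 1 = m by omega]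
    apply Finset.sum_congr rfl
    intro p hp
    simp only [Finset.mem_range] at hp
    obtain ⟨r, rfl⟩ : ∃ r, m = 2 * p + r := ⟨m - 2 * p, by omega⟩
    rw [show 2 * p + r + 2 - 2 * (p + 1) = r by omega,
      Nat.cast_choose ℚ (show p + 1 ≤ 3 * p + 1 by omega),
      Nat.cast_choose ℚ (show 3 * p + 1 ≤ 2 * p + r + 1 + p by omega),
      Nat.cast_choose ℚ (show 2 * p + r ≤ 2 * p + r + (p + 1) by omega),
      Nat.cast_choose ℚ (show r ≤ 2 * p + r + 1 by omega),
      show 3 * p + 1 - (p + 1) = 2 * p by omega,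
      show 2 * p + r + 1 + p - (3 * p + 1) = r by omega,
      show 2 * p + r + (p + 1) - (2 * p + r) = p + 1 by omega,
      show 2 * p + r + 1 - r = 2 * p + 1 by omega,
      show 2 * p + r + (p + 1) = 2 * p + r + 1 + p by omega,
      Nat.factorial_succ (2 * p + r), Nat.factorial_succ (2 * p)]
    have h1 : ((2 * p + r : ℕ) : ℚ) + 1 ≠ 0 := by positivity
    push_cast at h1 ⊢
    field_simp
end

section
/- For every integer n >= 0: \sum_{p=0}^{n} (-1)^{n-p} * C(n, p) * C_p = \sum_{p=0}^{\lfloor n/2 \rfloor} (1/(2p+1)) * C(3p, p) * C(p, n-2p), and \sum_{p=0}^{n} (-1)^{n-p} * C(n+1, p+1) * C_{p+1} = \sum_{p=0}^{\lfloor n/2 \rfloor} (1/(2p+1)) * C(3p+1, p+1) * C(p, n-2p). -/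
open Finset

/-- Coefficients of powers of the ternary tree series, defined by recursion. -/
def aa : ℕ → ℕ → ℚ
  | 0, _ => 1
  | _ + 1, 0 => 0
  | p + 1, k + 1 => aa (p + 1) k + aa p (k + 3)

/-- Coefficients of powers of the Catalan series, defined by recursion. -/
def bb : ℕ → ℕ → ℚ
  | 0, _ => 1
  | _ + 1, 0 => 0
  | p + 1, k + 1 => bb (p + 1) k + bb p (k + 2)

theorem aa_zero (k : ℕ) : aa 0 k = 1 := by simp [aa]
theorem aa_succ_zero (p : ℕ) : aa (p + 1) 0 = 0 := by simp [aa]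
theorem aa_succ_succ (p k : ℕ) : aa (p + 1) (k + 1) = aa (p + 1) k + aa p (k + 3) := by
  rw [aa]
theorem bb_zero (k : ℕ) : bb 0 k = 1 := by simp [bb]
theorem bb_succ_zero (p : ℕ) : bb (p + 1) 0 = 0 := by simp [bb]
theorem bb_succ_succ (p k : ℕ) : bb (p + 1) (k + 1) = bb (p + 1) k + bb p (k + 2) := by
  rw [bb]

theorem aa_closed (p : ℕ) : ∀ k : ℕ, aa p (k + 1) =
    (k + 1) * ((3 * p + k).factorial : ℚ) / (p.factorial * (2 * p + k + 1).factorial) := by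
  induction p with
  | zero =>
    intro k
    have h := Nat.factorial_ne_zero k
    rw [aa_zero]
    simp only [Nat.mul_zero, Nat.zero_add, Nat.factorial_zero, Nat.factorial_succ]
    push_cast
    field_simp
  | succ p ih =>
    intro k
    induction k with
    | zero =>
      rw [aa_succ_succ, aa_succ_zero, ih]
      rw [show 3 * (p + 1) + 0 = (3 * p + 2) + 1 by ring,
        show 2 * (p + 1) + 0 + 1 = 2 * p + 2 + 1 by ring,
        Nat.factorial_succ (3 * p + 2), Nat.factorial_succ p]
      have h1 := Nat.factorial_ne_zero p
      have h2 := Nat.factorial_ne_zero (2 * p + 2 + 1)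
      push_cast
      field_simp
      ring
    | succ k ihk =>
      rw [aa_succ_succ, ihk, ih]
      rw [show 3 * (p + 1) + (k + 1) = (3 * p + k + 3) + 1 by ring,
        show 2 * (p + 1) + (k + 1) + 1 = (2 * p + k + 3) + 1 by ring,
        show 3 * (p + 1) + k = (3 * p + k + 3) by ring,
        show 2 * (p + 1) + k + 1 = (2 * p + k + 3) by ring,
        show 3 * p + (k + 1 + 2) = (3 * p + k + 3) by ring,
        show 2 * p + (k + 1 + 2) + 1 = (2 * p + k + 3) + 1 by ring,
        Nat.factorial_succ (3 * p + k + 3), Nat.factorial_succ (2 * p + k + 3),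
        Nat.factorial_succ p]
      have h1 := Nat.factorial_ne_zero p
      have h2 := Nat.factorial_ne_zero (2 * p + k + 3)
      push_cast
      field_simp
      ring

theorem bb_closed (p : ℕ) : ∀ k : ℕ, bb p (k + 1) =
    (k + 1) * ((2 * p + k).factorial : ℚ) / (p.factorial * (p + k + 1).factorial) := by
  induction p with
  | zero =>
    intro k
    have h := Nat.factorial_ne_zero k
    rw [bb_zero]
    simp only [Nat.mul_zero, Nat.zero_add, Nat.factorial_zero, Nat.factorial_succ]
    push_cast
    field_simp
  | succ p ih =>
    intro k
    induction k with
    | zero =>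
      rw [bb_succ_succ, bb_succ_zero, ih]
      rw [show 2 * (p + 1) + 0 = (2 * p + 1) + 1 by ring,
        show (p + 1) + 0 + 1 = p + 1 + 1 by ring,
        Nat.factorial_succ (2 * p + 1), Nat.factorial_succ p]
      have h1 := Nat.factorial_ne_zero p
      have h2 := Nat.factorial_ne_zero (p + 1 + 1)
      push_cast
      field_simp
      ring
    | succ k ihk =>
      rw [bb_succ_succ, ihk, ih]
      rw [show 2 * (p + 1) + (k + 1) = (2 * p + k + 2) + 1 by ring,
        show (p + 1) + (k + 1) + 1 = (p + k + 2) + 1 by ring,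
        show 2 * (p + 1) + k = (2 * p + k + 2) by ring,
        show (p + 1) + k + 1 = (p + k + 2) by ring,
        show 2 * p + (k + 1 + 1) = (2 * p + k + 2) by ring,
        show p + (k + 1 + 1) + 1 = (p + k + 2) + 1 by ring,
        Nat.factorial_succ (2 * p + k + 2), Nat.factorial_succ (p + k + 2),
        Nat.factorial_succ p]
      have h1 := Nat.factorial_ne_zero p
      have h2 := Nat.factorial_ne_zero (p + k + 2)
      push_cast
      field_simp
      ring

theorem bb_one (p : ℕ) : bb p 1 = (1 : ℚ) / (p + 1) * Nat.choose (2 * p) p := by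
  have h := bb_closed p 0
  rw [Nat.cast_choose ℚ (show p ≤ 2 * p by omega), show 2 * p - p = p by omega]
  rw [zero_add] at h
  rw [h, show p + 0 + 1 = p + 1 by ring, Nat.factorial_succ p]
  have h1 := Nat.factorial_ne_zero p
  push_cast
  field_simp
  simp

theorem aa_one (p : ℕ) : aa p 1 = (1 : ℚ) / (2 * p + 1) * Nat.choose (3 * p) p := by
  have h := aa_closed p 0
  rw [Nat.cast_choose ℚ (show p ≤ 3 * p by omega), show 3 * p - p = 2 * p by omega]
  rw [zero_add] at h
  rw [h, show 2 * p + 0 + 1 = 2 * p + 1 by ring, Nat.factorial_succ (2 * p)]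
  have h1 := Nat.factorial_ne_zero p
  have h2 := Nat.factorial_ne_zero (2 * p)
  push_cast
  field_simp
  simp

theorem aa_two (p : ℕ) : aa p 2 = (1 : ℚ) / (2 * p + 1) * Nat.choose (3 * p + 1) (p + 1) := by
  have h := aa_closed p 1
  rw [Nat.cast_choose ℚ (show p + 1 ≤ 3 * p + 1 by omega),
    show 3 * p + 1 - (p + 1) = 2 * p by omega]
  rw [show 1 + 1 = 2 by rfl] at h
  rw [h, Nat.factorial_succ (2 * p + 1), Nat.factorial_succ (2 * p), Nat.factorial_succ p]
  have h1 := Nat.factorial_ne_zero p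
  have h2 := Nat.factorial_ne_zero (2 * p)
  push_cast
  field_simp
  ring

/-- The right-hand sums. -/
def Bn (k n : ℕ) : ℚ := ∑ p ∈ Finset.range (n / 2 + 1), aa p k * Nat.choose p (n - 2 * p)

theorem Bn_zero (k : ℕ) : Bn k 0 = 1 := by simp [Bn, aa_zero]
theorem Bn_one (k : ℕ) : Bn k 1 = 0 := by simp [Bn]
theorem Bn_two (k : ℕ) : Bn k 2 = aa 1 k := by simp [Bn, Finset.sum_range_succ]

theorem Bn_zero_left (n : ℕ) : Bn 0 (n + 1) = 0 := by
  apply Finset.sum_eq_zero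
  intro p _
  cases p with
  | zero => simp
  | succ p => simp [aa_succ_zero]

theorem Bn_shift (k n : ℕ) : Bn k (n + 3) =
    ∑ p ∈ Finset.range ((n + 1) / 2 + 1), aa (p + 1) k * Nat.choose (p + 1) (n + 1 - 2 * p) := by
  unfold Bn
  rw [show (n + 3) / 2 + 1 = ((n + 1) / 2 + 1) + 1 by omega, Finset.sum_range_succ']
  simp only [Nat.mul_zero, Nat.sub_zero, Nat.choose_zero_succ, Nat.cast_zero, mul_zero, add_zero]
  apply Finset.sum_congr rfl
  intro p _
  rw [show n + 3 - 2 * (p + 1) = n + 1 - 2 * p by omega]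

theorem Bn_aux (k n : ℕ) :
    ∑ p ∈ Finset.range ((n + 1) / 2 + 1), aa p k * (Nat.choose (p + 1) (n + 1 - 2 * p) : ℚ)
      = Bn k (n + 1) + Bn k n := by
  have h : Bn k n = ∑ p ∈ Finset.range ((n + 1) / 2 + 1),
      if 2 * p ≤ n then aa p k * (Nat.choose p (n - 2 * p) : ℚ) else 0 := by
    unfold Bn
    rw [← Finset.sum_filter]
    apply Finset.sum_congr _ (fun _ _ => rfl)
    ext p
    simp only [Finset.mem_range, Finset.mem_filter]
    omega
  rw [h, Bn, ← Finset.sum_add_distrib]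
  apply Finset.sum_congr rfl
  intro p hp
  rw [Finset.mem_range] at hp
  split_ifs with h2
  · rw [show n + 1 - 2 * p = (n - 2 * p) + 1 by omega, Nat.choose_succ_succ]
    push_cast
    ring
  · rw [show n + 1 - 2 * p = 0 by omega]
    simp

theorem Bn_rec (k n : ℕ) :
    Bn (k + 1) (n + 3) = Bn k (n + 3) + Bn (k + 3) (n + 1) + Bn (k + 3) n := by
  rw [add_assoc, ← Bn_aux, Bn_shift, Bn_shift, ← Finset.sum_add_distrib]
  apply Finset.sum_congr rfl
  intro p _
  rw [aa_succ_succ]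
  ring

/-- Generating series of the right-hand sums. -/
noncomputable def BS (k : ℕ) : PowerSeries ℚ := PowerSeries.mk (Bn k)

theorem BS_zero : BS 0 = 1 := by
  ext n
  cases n with
  | zero => simp [BS, Bn_zero]
  | succ n => simp [BS, Bn_zero_left, PowerSeries.coeff_one]

theorem BS_rec (k : ℕ) : BS (k + 1) = BS k + PowerSeries.X * (PowerSeries.X *
    (BS (k + 3) + PowerSeries.X * BS (k + 3))) := by
  ext n
  rcases n with _ | _ | _ | n
  · simp [BS, Bn_zero]
  · rw [map_add, PowerSeries.coeff_succ_X_mul, PowerSeries.coeff_zero_X_mul]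
    simp [BS, Bn_one]
  · rw [map_add, PowerSeries.coeff_succ_X_mul, PowerSeries.coeff_succ_X_mul, map_add,
      PowerSeries.coeff_zero_X_mul]
    simp [BS, Bn_two, Bn_zero, aa_succ_succ 0, aa_zero]
  · rw [map_add, PowerSeries.coeff_succ_X_mul, PowerSeries.coeff_succ_X_mul, map_add,
      PowerSeries.coeff_succ_X_mul]
    simp only [BS, PowerSeries.coeff_mk]
    rw [Bn_rec]
    ring

theorem BS_quad (k : ℕ) : (1 + PowerSeries.X) * BS (k + 1) =
    BS k + PowerSeries.X * ((1 + PowerSeries.X) * BS (k + 2)) := by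
  have key : ∀ n k : ℕ, PowerSeries.coeff n ((1 + PowerSeries.X) * BS (k + 1) -
      (BS k + PowerSeries.X * ((1 + PowerSeries.X) * BS (k + 2)))) = 0 := by
    intro n
    have hG : ∀ k, (1 + PowerSeries.X) * BS (k + 1) -
      (BS k + PowerSeries.X * ((1 + PowerSeries.X) * BS (k + 2))) =
      PowerSeries.X * (-((1 + PowerSeries.X) * BS (k + 1 + 1) -
      (BS (k + 1) + PowerSeries.X * ((1 + PowerSeries.X) * BS (k + 1 + 2))))) := by
      intro k
      have := BS_rec k
      rw [show k + 1 + 2 = k + 3 by ring, show k + 1 + 1 = k + 2 by ring]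
      linear_combination this
    induction n with
    | zero => intro k; rw [hG, PowerSeries.coeff_zero_X_mul]
    | succ n ih => intro k; rw [hG, PowerSeries.coeff_succ_X_mul, map_neg, ih, neg_zero]
  rw [← sub_eq_zero]
  ext n
  rw [key, map_zero]

/-- Signed binomial transform. -/
def LL (f : ℕ → ℚ) : ℕ → ℚ
  | 0 => f 0
  | n + 1 => LL (fun p => f (p + 1)) n - LL f n

theorem LL_add (n : ℕ) : ∀ f g : ℕ → ℚ, LL (fun p => f p + g p) n = LL f n + LL g n := by
  induction n with
  | zero => intro f g; simp [LL]
  | succ n ih =>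
    intro f g
    simp only [LL]
    rw [ih f g, ih (fun p => f (p + 1)) (fun p => g (p + 1))]
    ring

theorem LL_zero (n : ℕ) : LL (fun _ => 0) n = 0 := by
  induction n with
  | zero => simp [LL]
  | succ n ih => simp [LL, ih]

theorem LL_eq (n : ℕ) (f : ℕ → ℚ) :
    LL f n = ∑ p ∈ Finset.range (n + 1), (-1 : ℚ) ^ (n - p) * Nat.choose n p * f p := by
  have key : ∀ n (f : ℕ → ℚ) (y : ℕ), LL (fun p => f (y + p)) n = (fwdDiff 1)^[n] f y := by
    intro n
    induction n with
    | zero => intro f y; simp [LL]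
    | succ n ih =>
      intro f y
      rw [Function.iterate_succ_apply', fwdDiff, ← ih, ← ih, LL]
      simp only [add_assoc, add_comm, add_left_comm]
  have h := key n f 0
  simp only [zero_add] at h
  rw [h, fwdDiff_iter_eq_sum_shift]
  apply Finset.sum_congr rfl
  intro p _
  simp

theorem DV (n : ℕ) : ∀ k : ℕ, LL (fun p => bb p (k + 1)) n =
    PowerSeries.coeff n ((1 + PowerSeries.X) ^ k * BS (k + 1)) := by
  induction n with
  | zero => intro k; simp [LL, bb_zero, BS, Bn_zero]
  | succ n ih =>
    have e : ∀ k, PowerSeries.coeff (n + 1) ((1 + PowerSeries.X) ^ k * BS (k + 1)) =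
        PowerSeries.coeff (n + 1) ((1 + PowerSeries.X) ^ k * BS k) +
        LL (fun p => bb p (k + 1 + 1)) n - LL (fun p => bb p (k + 1)) n := by
      intro k
      have e2 : PowerSeries.coeff (n + 1)
          ((1 + PowerSeries.X) * ((1 + PowerSeries.X) ^ k * BS (k + 1)))
          = PowerSeries.coeff (n + 1) ((1 + PowerSeries.X) ^ k * BS (k + 1))
          + PowerSeries.coeff n ((1 + PowerSeries.X) ^ k * BS (k + 1)) := by
        rw [add_mul, one_mul, map_add, PowerSeries.coeff_succ_X_mul]
      have e1 : (1 + PowerSeries.X) * ((1 + PowerSeries.X) ^ k * BS (k + 1)) =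
          (1 + PowerSeries.X) ^ k * BS k +
          PowerSeries.X * ((1 + PowerSeries.X) ^ (k + 1) * BS (k + 1 + 1)) := by
        rw [pow_succ]
        linear_combination (1 + PowerSeries.X) ^ k * BS_quad k
      rw [e1, map_add, PowerSeries.coeff_succ_X_mul, ← ih, ← ih] at e2
      linarith
    have e3 : ∀ k, LL (fun p => bb p (k + 1)) (n + 1) =
        LL (fun p => bb (p + 1) k) n + LL (fun p => bb p (k + 1 + 1)) n
          - LL (fun p => bb p (k + 1)) n := by
      intro k
      rw [LL]
      simp only [bb_succ_succ]
      rw [LL_add]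
    intro k
    induction k with
    | zero =>
      rw [e, e3, BS_zero]
      simp [bb_succ_zero, LL_zero, PowerSeries.coeff_one]
    | succ k ihk =>
      have h1 : PowerSeries.coeff (n + 1) ((1 + PowerSeries.X) ^ (k + 1) * BS (k + 1)) =
          PowerSeries.coeff (n + 1) ((1 + PowerSeries.X) ^ k * BS (k + 1)) +
          PowerSeries.coeff n ((1 + PowerSeries.X) ^ k * BS (k + 1)) := by
        rw [pow_succ', mul_assoc, add_mul, one_mul, map_add, PowerSeries.coeff_succ_X_mul]
      rw [e, e3, h1, ← ih, ← ihk, LL]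
      ring

theorem S_eq (n : ℕ) : LL (fun p => bb p 1) n = Bn 1 n := by
  rw [DV n 0]
  simp [BS]

theorem Bn_quad_zero : Bn 1 1 + Bn 1 0 = Bn 2 0 := by simp [Bn_zero, Bn_one]

theorem Bn_quad (n : ℕ) : Bn 1 (n + 2) + Bn 1 (n + 1) = Bn 2 (n + 1) + Bn 2 n := by
  have h := congrArg (PowerSeries.coeff (n + 2)) (BS_quad 0)
  rw [map_add, PowerSeries.coeff_succ_X_mul, add_mul, one_mul, map_add, add_mul, one_mul, map_add,
    PowerSeries.coeff_succ_X_mul, PowerSeries.coeff_succ_X_mul, BS_zero] at h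
  simpa [BS, PowerSeries.coeff_one] using h

theorem U_eq (n : ℕ) : Bn 1 (n + 1) + (-1) ^ n = Bn 2 n := by
  induction n with
  | zero => simp [Bn_zero, Bn_one]
  | succ n ih =>
    have := Bn_quad n
    rw [pow_succ]
    linarith

theorem stmt18 (n : ℕ) :
    (∑ p ∈ Finset.range (n + 1),
        (-1 : ℚ) ^ (n - p) * Nat.choose n p * ((1 : ℚ) / (p + 1) * Nat.choose (2 * p) p)) =
      (∑ p ∈ Finset.range (n / 2 + 1),
        (1 : ℚ) / (2 * p + 1) * Nat.choose (3 * p) p * Nat.choose p (n - 2 * p)) ∧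
    (∑ p ∈ Finset.range (n + 1),
        (-1 : ℚ) ^ (n - p) * Nat.choose (n + 1) (p + 1) *
          ((1 : ℚ) / (p + 2) * Nat.choose (2 * (p + 1)) (p + 1))) =
      ∑ p ∈ Finset.range (n / 2 + 1),
        (1 : ℚ) / (2 * p + 1) * Nat.choose (3 * p + 1) (p + 1) * Nat.choose p (n - 2 * p) := by
  have hS : ∀ n, ∑ p ∈ Finset.range (n + 1),
      (-1 : ℚ) ^ (n - p) * Nat.choose n p * ((1 : ℚ) / (p + 1) * Nat.choose (2 * p) p) = Bn 1 n := by
    intro n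
    rw [← S_eq, LL_eq]
    simp only [bb_one]
  constructor
  · rw [hS, Bn]
    simp only [aa_one]
  · have h := hS (n + 1)
    have hU := U_eq n
    rw [Finset.sum_range_succ'] at h
    have h2 : Bn 2 n = ∑ p ∈ Finset.range (n / 2 + 1),
        (1 : ℚ) / (2 * p + 1) * Nat.choose (3 * p + 1) (p + 1) * Nat.choose p (n - 2 * p) := by
      rw [Bn]
      simp only [aa_two]
    rw [← h2, ← hU, ← h]
    simp only [Nat.add_sub_add_right, Nat.cast_add, Nat.cast_one, add_assoc, one_add_one_eq_two]
    simp [pow_succ]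
end

section
/- For every integer n >= 0: \sum_{p=0}^{2n} (-1)^{p} * ((3p+2)/(2n+2p+2)) * C(3n, n+p) * C_p = (1/(2n+1)) * C(3n, n), and \sum_{p=0}^{2n} (-1)^{p} * ((3p+4)/(2n+2p+4)) * C(3n+1, n+p+1) * C_{p+1} = (1/(2n+1)) * C(3n+1, n+1). -/
open Finset

/-- rational Catalan numbers -/
def cq (p : ℕ) : ℚ := (1 : ℚ) / (p + 1) * Nat.choose (2 * p) p

lemma cq_succ (p : ℕ) : ((p : ℚ) + 2) * cq (p + 1) = 2 * (2 * p + 1) * cq p := by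
  have h := Nat.succ_mul_centralBinom_succ p
  have h' : ((p : ℚ) + 1) * (Nat.choose (2 * (p + 1)) (p + 1) : ℚ)
      = 2 * (2 * p + 1) * Nat.choose (2 * p) p := by
    simp only [Nat.centralBinom] at h
    exact_mod_cast h
  have h1 : (p : ℚ) + 1 ≠ 0 := by positivity
  have h2 : (p : ℚ) + 2 ≠ 0 := by positivity
  have h3 : (p : ℚ) + 1 + 1 ≠ 0 := by positivity
  unfold cq
  push_cast
  field_simp
  linear_combination ((p : ℚ) + 2) * h'

lemma chA (N k : ℕ) : ((N : ℚ) + 1 - k) * (Nat.choose (N + 1) k : ℚ)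
    = (N + 1) * Nat.choose N k := by
  rcases le_or_gt k (N + 1) with hk | hk
  · have h := Nat.choose_mul_succ_eq N k
    have h' : (Nat.choose N k : ℚ) * (N + 1) = Nat.choose (N + 1) k * ((N + 1 - k : ℕ) : ℚ) := by
      exact_mod_cast h
    rw [Nat.cast_sub hk] at h'
    push_cast at h'
    linarith
  · rw [Nat.choose_eq_zero_of_lt hk, Nat.choose_eq_zero_of_lt (by omega)]
    simp

lemma chB (N k : ℕ) : ((k : ℚ) + 1) * (Nat.choose (N + 1) (k + 1) : ℚ)
    = (N + 1) * Nat.choose N k := by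
  have h := Nat.add_one_mul_choose_eq N k
  have h' : ((N : ℚ) + 1) * Nat.choose N k = Nat.choose (N + 1) (k + 1) * (k + 1) := by
    exact_mod_cast h
  linarith

lemma ch3 (N k : ℕ) :
    ((N : ℚ) + 3) * (N + 2) * (N + 1) * (Nat.choose N k : ℚ)
      = (k + 1) * (N + 2 - k) * (N + 1 - k) * Nat.choose (N + 3) (k + 1) := by
  have h1 := chA N k
  have h2 := chA (N + 1) k
  have h3 := chB (N + 2) k
  push_cast at h1 h2 h3
  simp only [add_assoc] at h1 h2 h3
  norm_num at h1 h2 h3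
  linear_combination (-((N : ℚ) + 3) * (N + 2)) * h1 - ((N : ℚ) + 3) * (N + 1 - k) * h2
    - (N + 2 - k : ℚ) * (N + 1 - k) * h3

lemma sum1 (n : ℕ) : ∑ p ∈ range (2 * n + 1),
    (-1 : ℚ) ^ p * (3 * p + 2) * cq p * Nat.choose (3 * n + 1) (n + 1 + p)
      = 2 * Nat.choose (3 * n + 1) n := by
  induction n with
  | zero => simp [cq]
  | succ n ih =>
    have hext : ∑ p ∈ range (2 * n + 3),
        (-1 : ℚ) ^ p * (3 * p + 2) * cq p * Nat.choose (3 * n + 1) (n + 1 + p)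
        = 2 * Nat.choose (3 * n + 1) n := by
      rw [sum_range_succ, sum_range_succ, ih,
        Nat.choose_eq_zero_of_lt (show 3 * n + 1 < n + 1 + (2 * n + 1) by omega),
        Nat.choose_eq_zero_of_lt (show 3 * n + 1 < n + 1 + (2 * n + 1 + 1) by omega)]
      simp
    have key := Finset.sum_range_sub (fun p : ℕ => -((-1 : ℚ) ^ p * cq p *
      Nat.choose (3 * n + 4) (n + 2 + p) * (p + 1) * (n + p + 2) * p ^ 2)) (2 * n + 3)
    have hz : Nat.choose (3 * n + 4) (n + 2 + (2 * n + 3)) = 0 :=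
      Nat.choose_eq_zero_of_lt (by omega)
    rw [hz] at key
    have hterm : ∀ p : ℕ, (-((-1 : ℚ) ^ (p + 1) * cq (p + 1) *
        Nat.choose (3 * n + 4) (n + 2 + (p + 1)) * ((p + 1 : ℕ) + 1) * (n + (p + 1 : ℕ) + 2)
          * ((p + 1 : ℕ) : ℚ) ^ 2)) - (-((-1 : ℚ) ^ p * cq p *
        Nat.choose (3 * n + 4) (n + 2 + p) * (p + 1) * (n + p + 2) * p ^ 2))
        = ((n : ℚ) + 1) * (2 * n + 3) * (2 * n + 2) * ((-1 : ℚ) ^ p * (3 * p + 2) * cq p *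
            Nat.choose (3 * n + 4) (n + 2 + p))
          - (3 * n + 4 : ℚ) * (3 * n + 3) * (3 * n + 2) * ((-1 : ℚ) ^ p * (3 * p + 2) * cq p *
            Nat.choose (3 * n + 1) (n + 1 + p)) := by
      intro p
      have e1 := cq_succ p
      have e2 := ch3 (3 * n + 1) (n + 1 + p)
      have e3 := chA (3 * n + 3) (n + 2 + p)
      have e4 := chB (3 * n + 3) (n + 2 + p)
      rw [show n + 1 + p + 1 = n + 2 + p by ring] at e2
      rw [show n + 2 + p + 1 = n + 2 + (p + 1) by ring] at e4
      push_cast at *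
      rw [pow_succ]
      generalize (Nat.choose (3 * n + 4) (n + 2 + (p + 1)) : ℚ) = X at *
      generalize (Nat.choose (3 * n + 4) (n + 2 + p) : ℚ) = Y at *
      generalize (Nat.choose (3 * n + 1) (n + 1 + p) : ℚ) = Z at *
      generalize (Nat.choose (3 * n + 3) (n + 2 + p) : ℚ) = W at *
      generalize cq (p + 1) = c' at *
      generalize cq p = c at *
      generalize (-1 : ℚ) ^ p = s at *
      linear_combination s * X * (n + p + 3) * (p + 1) ^ 2 * e1
        + s * (3 * p + 2) * c * e2
        + s * 2 * (2 * p + 1) * c * (p + 1) ^ 2 * (e4 - e3)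
    have key2 : ((n : ℚ) + 1) * (2 * n + 3) * (2 * n + 2) * (∑ p ∈ range (2 * n + 3),
          ((-1 : ℚ) ^ p * (3 * p + 2) * cq p * Nat.choose (3 * n + 4) (n + 2 + p)))
        - (3 * n + 4 : ℚ) * (3 * n + 3) * (3 * n + 2) * (∑ p ∈ range (2 * n + 3),
          ((-1 : ℚ) ^ p * (3 * p + 2) * cq p * Nat.choose (3 * n + 1) (n + 1 + p))) = 0 := by
      rw [mul_sum, mul_sum, ← sum_sub_distrib, ← sum_congr rfl (fun p _ => hterm p), key]
      simp
    rw [hext] at key2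
    have hc := ch3 (3 * n + 1) n
    push_cast at hc
    have hne : ((n : ℚ) + 1) * (2 * n + 3) * (2 * n + 2) ≠ 0 := by positivity
    have e : ∑ p ∈ range (2 * (n + 1) + 1), (-1 : ℚ) ^ p * (3 * p + 2) * cq p *
        Nat.choose (3 * (n + 1) + 1) (n + 1 + 1 + p) = ∑ p ∈ range (2 * n + 3),
          ((-1 : ℚ) ^ p * (3 * p + 2) * cq p * Nat.choose (3 * n + 4) (n + 2 + p)) := rfl
    rw [e, show 3 * (n + 1) + 1 = 3 * n + 4 by ring]
    rw [show 3 * n + 1 + 3 = 3 * n + 4 by ring] at hc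
    apply mul_left_cancel₀ hne
    linear_combination key2 + 2 * hc

lemma sum2 (n : ℕ) : ∑ p ∈ range (2 * n + 1),
    (-1 : ℚ) ^ p * (3 * p + 4) * cq (p + 1) * Nat.choose (3 * n + 2) (n + 2 + p)
      = 2 * Nat.choose (3 * n + 2) (n + 1) := by
  induction n with
  | zero => simp [cq]; norm_num
  | succ n ih =>
    have hext : ∑ p ∈ range (2 * n + 3),
        (-1 : ℚ) ^ p * (3 * p + 4) * cq (p + 1) * Nat.choose (3 * n + 2) (n + 2 + p)
        = 2 * Nat.choose (3 * n + 2) (n + 1) := by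
      rw [sum_range_succ, sum_range_succ, ih,
        Nat.choose_eq_zero_of_lt (show 3 * n + 2 < n + 2 + (2 * n + 1) by omega),
        Nat.choose_eq_zero_of_lt (show 3 * n + 2 < n + 2 + (2 * n + 1 + 1) by omega)]
      simp
    have key := Finset.sum_range_sub (fun p : ℕ => -((-1 : ℚ) ^ p * cq (p + 1) *
      Nat.choose (3 * n + 5) (n + 3 + p) * (p + 2) * (n + p + 3) * (p * (p + 1)))) (2 * n + 3)
    have hz : Nat.choose (3 * n + 5) (n + 3 + (2 * n + 3)) = 0 :=
      Nat.choose_eq_zero_of_lt (by omega)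
    rw [hz] at key
    have hterm : ∀ p : ℕ, (-((-1 : ℚ) ^ (p + 1) * cq (p + 1 + 1) *
        Nat.choose (3 * n + 5) (n + 3 + (p + 1)) * ((p + 1 : ℕ) + 2) * (n + (p + 1 : ℕ) + 3)
          * (((p + 1 : ℕ) : ℚ) * ((p + 1 : ℕ) + 1)))) - (-((-1 : ℚ) ^ p * cq (p + 1) *
        Nat.choose (3 * n + 5) (n + 3 + p) * (p + 2) * (n + p + 3) * (p * (p + 1))))
        = ((n : ℚ) + 2) * (2 * n + 3) * (2 * n + 2) * ((-1 : ℚ) ^ p * (3 * p + 4) * cq (p + 1) *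
            Nat.choose (3 * n + 5) (n + 3 + p))
          - (3 * n + 5 : ℚ) * (3 * n + 4) * (3 * n + 3) * ((-1 : ℚ) ^ p * (3 * p + 4) *
            cq (p + 1) * Nat.choose (3 * n + 2) (n + 2 + p)) := by
      intro p
      have e1 := cq_succ (p + 1)
      have e2 := ch3 (3 * n + 2) (n + 2 + p)
      have e3 := chA (3 * n + 4) (n + 3 + p)
      have e4 := chB (3 * n + 4) (n + 3 + p)
      rw [show n + 2 + p + 1 = n + 3 + p by ring] at e2
      rw [show n + 3 + p + 1 = n + 3 + (p + 1) by ring] at e4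
      push_cast at *
      rw [pow_succ]
      generalize (Nat.choose (3 * n + 5) (n + 3 + (p + 1)) : ℚ) = X at *
      generalize (Nat.choose (3 * n + 5) (n + 3 + p) : ℚ) = Y at *
      generalize (Nat.choose (3 * n + 2) (n + 2 + p) : ℚ) = Z at *
      generalize (Nat.choose (3 * n + 4) (n + 3 + p) : ℚ) = W at *
      generalize cq (p + 1 + 1) = c' at *
      generalize cq (p + 1) = c at *
      generalize (-1 : ℚ) ^ p = s at *
      linear_combination s * X * (n + p + 4) * ((p + 1) * (p + 2)) * e1
        + s * (3 * p + 4) * c * e2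
        + s * 2 * (2 * p + 3) * c * ((p + 1) * (p + 2)) * (e4 - e3)
    have key2 : ((n : ℚ) + 2) * (2 * n + 3) * (2 * n + 2) * (∑ p ∈ range (2 * n + 3),
          ((-1 : ℚ) ^ p * (3 * p + 4) * cq (p + 1) * Nat.choose (3 * n + 5) (n + 3 + p)))
        - (3 * n + 5 : ℚ) * (3 * n + 4) * (3 * n + 3) * (∑ p ∈ range (2 * n + 3),
          ((-1 : ℚ) ^ p * (3 * p + 4) * cq (p + 1) * Nat.choose (3 * n + 2) (n + 2 + p))) = 0 := by
      rw [mul_sum, mul_sum, ← sum_sub_distrib, ← sum_congr rfl (fun p _ => hterm p), key]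
      simp
    rw [hext] at key2
    have hc := ch3 (3 * n + 2) (n + 1)
    push_cast at hc
    have hne : ((n : ℚ) + 2) * (2 * n + 3) * (2 * n + 2) ≠ 0 := by positivity
    have e : ∑ p ∈ range (2 * (n + 1) + 1), (-1 : ℚ) ^ p * (3 * p + 4) * cq (p + 1) *
        Nat.choose (3 * (n + 1) + 2) (n + 1 + 2 + p) = ∑ p ∈ range (2 * n + 3),
          ((-1 : ℚ) ^ p * (3 * p + 4) * cq (p + 1) * Nat.choose (3 * n + 5) (n + 3 + p)) := by
      refine sum_congr rfl fun p _ => ?_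
      rw [show 3 * (n + 1) + 2 = 3 * n + 5 by ring, show n + 1 + 2 + p = n + 3 + p by ring]
    rw [e, show 3 * (n + 1) + 2 = 3 * n + 5 by ring]
    rw [show 3 * n + 2 + 3 = 3 * n + 5 by ring] at hc
    apply mul_left_cancel₀ hne
    linear_combination key2 + 2 * hc

theorem stmt19 (n : ℕ) :
    (∑ p ∈ Finset.range (2 * n + 1),
        (-1 : ℚ) ^ p * ((3 : ℚ) * p + 2) / (2 * n + 2 * p + 2) * Nat.choose (3 * n) (n + p) *
          ((1 : ℚ) / (p + 1) * Nat.choose (2 * p) p)) =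
      (1 : ℚ) / (2 * n + 1) * Nat.choose (3 * n) n ∧
    (∑ p ∈ Finset.range (2 * n + 1),
        (-1 : ℚ) ^ p * ((3 : ℚ) * p + 4) / (2 * n + 2 * p + 4) *
          Nat.choose (3 * n + 1) (n + p + 1) *
          ((1 : ℚ) / (p + 2) * Nat.choose (2 * (p + 1)) (p + 1))) =
      (1 : ℚ) / (2 * n + 1) * Nat.choose (3 * n + 1) (n + 1) := by
  have hn : (2 * n + 1 : ℚ) ≠ 0 := by positivity
  constructor
  · have h3 : (2 * (3 * n + 1) : ℚ) ≠ 0 := by positivity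
    apply mul_left_cancel₀ h3
    have hA := chA (3 * n) n
    push_cast at hA
    have hR : 2 * (3 * n + 1 : ℚ) * (1 / (2 * n + 1) * Nat.choose (3 * n) n)
        = 2 * Nat.choose (3 * n + 1) n := by
      field_simp
      linear_combination -hA
    rw [hR, ← sum1, mul_sum]
    refine sum_congr rfl fun p _ => ?_
    have hB := chB (3 * n) (n + p)
    rw [show n + p + 1 = n + 1 + p by ring] at hB
    push_cast at hB
    have hd : (2 * n + 2 * p + 2 : ℚ) ≠ 0 := by positivity
    change _ * (_ / _ * _ * cq p) = _
    generalize cq p = c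
    rw [div_mul_eq_mul_div, div_mul_eq_mul_div, mul_div_assoc', div_eq_iff hd]
    linear_combination (-2 * (-1 : ℚ) ^ p * (3 * p + 2) * c) * hB
  · have h3 : (2 * (3 * n + 2) : ℚ) ≠ 0 := by positivity
    apply mul_left_cancel₀ h3
    have hA := chA (3 * n + 1) (n + 1)
    push_cast at hA
    rw [show 3 * n + 1 + 1 = 3 * n + 2 by ring] at hA
    have hR : 2 * (3 * n + 2 : ℚ) * (1 / (2 * n + 1) * Nat.choose (3 * n + 1) (n + 1))
        = 2 * Nat.choose (3 * n + 2) (n + 1) := by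
      field_simp
      linear_combination -hA
    rw [hR, ← sum2, mul_sum]
    refine sum_congr rfl fun p _ => ?_
    have hB := chB (3 * n + 1) (n + p + 1)
    rw [show n + p + 1 + 1 = n + 2 + p by ring, show 3 * n + 1 + 1 = 3 * n + 2 by ring] at hB
    push_cast at hB
    have hd : (2 * n + 2 * p + 4 : ℚ) ≠ 0 := by positivity
    have hc : ((1 : ℚ) / (p + 2) * Nat.choose (2 * (p + 1)) (p + 1)) = cq (p + 1) := by
      unfold cq
      push_cast
      rw [show (p : ℚ) + 1 + 1 = p + 2 by ring]
    rw [hc]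
    generalize cq (p + 1) = c
    rw [div_mul_eq_mul_div, div_mul_eq_mul_div, mul_div_assoc', div_eq_iff hd]
    linear_combination (-2 * (-1 : ℚ) ^ p * (3 * p + 4) * c) * hB
end
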